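/- arXiv:1009.5106 — 3 statements merged into one kernel-verified Lean document; each statement's English description precedes it below -/
import Mathlib

section
/- For every even integer n > 1, r(n) ≤ n²/2. -/
/-- A cycle `c` of elements of `{1,...,n}` is a rosary of degree `n` if every
permutation of `{1,...,n}` occurs as a subsequence of some rotation of `c`. -/
def IsRosary (n : ℕ) (c : List ℕ) : Prop :=
  (∀ x ∈ c, 1 ≤ x ∧ x ≤ n) ∧
  ∀ p : List ℕ, p.Perm (List.range' 1 n) → ∃ j, p.Sublist (c.rotate j)

/-- `rosaryNumber n` is the minimal length of a rosary of degree `n`. -/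
noncomputable def rosaryNumber (n : ℕ) : ℕ :=
  sInf {r | ∃ c : List ℕ, c.length = r ∧ IsRosary n c}

/-!
The rosary is `b` copies of `1, n, n - 1, …, 2` followed by `a` copies of `1, 2, …, n`, where
`n = 2 * (a + b)` and `b - a ∈ {0, 1}`. A word fits into copies of an increasing word as soon as
there are more copies than non-ascents inside the word, so a permutation, read cyclically, has to be
cut into two arcs with fewer than `b` non-ascents in the first order and fewer than `a` in the
second. Around the circle the two kinds of non-ascents number `n` in total, because the step into
`1` is counted twice and the step out of `1` is not counted. If the second kind occurs `G` times,
then an arc of length `G + (b - a)` chosen by averaging does the job; the step into `1` makes the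
averaging inequality strict.
-/

open Finset
open scoped List

theorem sublist_of_subset_of_pairwise_lt {α β : Type*} [Preorder β] {key : α → β}
    {l₁ l₂ : List α} (hl₁ : l₁.Pairwise (key · < key ·)) (hl₂ : l₂.Pairwise (key · < key ·))
    (hsub : l₁ ⊆ l₂) : l₁ <+ l₂ := by
  have antisymm : Std.Antisymm (fun x y => key x < key y) :=
    ⟨fun _ _ hxy hyx => (lt_asymm hxy hyx).elim⟩
  have hnodup : l₁.Nodup := hl₁.imp fun hxy heq => (heq ▸ hxy).false
  exact List.sublist_of_subperm_of_pairwise (List.subperm_of_subset hnodup hsub) hl₁ hl₂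

theorem pairwise_toLex_lt_product {α β γ : Type*} [Preorder β] [Preorder γ] {l : List β}
    {w : List α} {key : α → γ} (hl : l.Pairwise (· < ·)) (hw : w.Pairwise (key · < key ·)) :
    (l ×ˢ w).Pairwise fun x y => toLex (x.1, key x.2) < toLex (y.1, key y.2) := by
  refine List.pairwise_flatMap.mpr ⟨fun _ _ => ?_, hl.imp fun hlt => ?_⟩
  · refine List.pairwise_map.mpr (hw.imp fun hlt => ?_)
    exact Prod.Lex.toLex_lt_toLex.mpr (.inr ⟨rfl, hlt⟩)
  · simp only [List.mem_map]
    rintro _ ⟨_, _, rfl⟩ _ ⟨_, _, rfl⟩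
    exact Prod.Lex.toLex_lt_toLex.mpr (.inl hlt)

theorem map_snd_range_product {α : Type*} (m : ℕ) (w : List α) :
    (List.range m ×ˢ w).map Prod.snd = (List.replicate m w).flatten := by
  induction m with
  | zero => rfl
  | succ m ih =>
    simp [List.range_succ, List.replicate_succ', ← ih, SProd.sprod, List.product]

theorem exists_sublist_rotate_of_isRotated {α : Type*} {p q c : List α} (hpq : p ~r q)
    (hq : q <+ c) : ∃ j, p <+ c.rotate j := by
  obtain ⟨k, hk, rfl⟩ := List.isRotated_iff_mod.mp hpq.symm
  rw [← List.take_append_drop k q] at hq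
  obtain ⟨c₁, c₂, rfl, h₁, h₂⟩ := List.append_sublist_iff.mp hq
  refine ⟨c₁.length, ?_⟩
  rw [List.rotate_eq_drop_append_take hk, List.rotate_append_length_eq]
  exact h₂.append h₁

theorem exists_periodic_map_Ico_eq_rotate {α : Type*} {p : List α} (hp : p ≠ []) :
    ∃ s : ℕ → α, Function.Periodic s p.length ∧
      ∀ i, (List.Ico i (i + p.length)).map s = p.rotate i := by
  have hmod (t : ℕ) : t % p.length < p.length := Nat.mod_lt t (List.length_pos_iff.mpr hp)
  refine ⟨fun t => p[t % p.length]'(hmod t), fun t => by simp, fun i => ?_⟩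
  refine List.ext_getElem (by simp) fun j _ _ => ?_
  simp [List.getElem_rotate, List.Ico, Nat.add_comm]

theorem sum_Ico_add_period {M : Type*} [AddCommMonoid M] {f : ℕ → M} {n : ℕ}
    (hf : Function.Periodic f n) (i : ℕ) : ∑ t ∈ Ico i (i + n), f t = ∑ t ∈ range n, f t := by
  have hmod := congrArg (fun m => (m.map f).sum) (Nat.multiset_Ico_map_mod i n)
  simp only [Multiset.map_map, Function.comp_def, hf.map_mod_nat] at hmod
  exact hmod

theorem sum_range_add_of_periodic {M : Type*} [AddCommMonoid M] {f : ℕ → M} {n : ℕ}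
    (hf : Function.Periodic f n) (i : ℕ) : ∑ t ∈ range n, f (t + i) = ∑ t ∈ range n, f t := by
  rw [← sum_Ico_add_period hf i, sum_Ico_eq_sum_range, Nat.add_sub_cancel_left]
  simp only [Nat.add_comm]

theorem sum_sum_Ico_add_of_periodic {M : Type*} [AddCommMonoid M] {f : ℕ → M} {n : ℕ}
    (hf : Function.Periodic f n) (L : ℕ) :
    ∑ i ∈ range n, ∑ t ∈ Ico i (i + L), f t = L • ∑ t ∈ range n, f t := by
  simp only [sum_Ico_eq_sum_range, Nat.add_sub_cancel_left]
  rw [sum_comm]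
  simp only [sum_range_add_of_periodic hf, sum_const, card_range]

theorem sum_Ico_add_le_of_mem {M : Type*} [AddCommMonoid M] [PartialOrder M] [IsOrderedAddMonoid M]
    [CanonicallyOrderedAdd M] {f e : ℕ → M} (hef : ∀ t, e (t + 1) ≤ f t) {i j k : ℕ}
    (hj : j ∈ Ico i k) : ∑ t ∈ Ico i j, f t + e k ≤ ∑ t ∈ Ico i k, f t := by
  obtain ⟨hij, hjk⟩ := mem_Ico.mp hj
  obtain ⟨k, rfl⟩ : ∃ l, k = l + 1 := ⟨k - 1, by omega⟩
  rw [sum_Ico_succ_top (by omega)]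
  exact add_le_add (sum_le_sum_of_subset (Ico_subset_Ico_right (by omega))) (hef k)

/-- The indicator that the step from `s t` to `s (t + 1)` fails to ascend. A word embedded greedily
into copies of an increasing word moves on to the next copy exactly at these steps. -/
def nonAscent {β : Type*} [LT β] [DecidableLT β] (s : ℕ → β) (t : ℕ) : ℕ :=
  if s t < s (t + 1) then 0 else 1

theorem nonAscent_periodic {β : Type*} [LT β] [DecidableLT β] {s : ℕ → β} {n : ℕ}
    (hs : Function.Periodic s n) : Function.Periodic (nonAscent s) n := fun t => by
  simp only [nonAscent, Nat.add_right_comm t n 1, hs t, hs (t + 1)]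

theorem toLex_sum_nonAscent_lt {β : Type*} [Preorder β] [DecidableLT β] (s : ℕ → β) {i j k : ℕ}
    (hij : i ≤ j) (hjk : j < k) :
    toLex (∑ t ∈ Ico i j, nonAscent s t, s j) < toLex (∑ t ∈ Ico i k, nonAscent s t, s k) := by
  refine Nat.rel_of_forall_rel_succ_of_le_of_lt (· < ·)
    (f := fun j => toLex (∑ t ∈ Ico i j, nonAscent s t, s j)) (fun j hij => ?_) hij hjk
  rw [Prod.Lex.toLex_lt_toLex, sum_Ico_succ_top hij]
  by_cases hasc : s j < s (j + 1)
  · exact .inr ⟨by simp [nonAscent, hasc], hasc⟩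
  · exact .inl (by simp [nonAscent, hasc])

/-- Pair each letter with the number of the copy of `w` that receives it: both words become
lexicographically increasing, so containment of letters already gives a subsequence. -/
theorem map_Ico_sublist_flatten_replicate {α β : Type*} [Preorder β] [DecidableLT β]
    {w : List α} {key : α → β} (hw : w.Pairwise (key · < key ·)) {s : ℕ → α} (hs : ∀ t, s t ∈ w)
    {i k m : ℕ} (hm : ∀ j ∈ Ico i k, ∑ t ∈ Ico i j, nonAscent (key ∘ s) t < m) :
    (List.Ico i k).map s <+ (List.replicate m w).flatten := by
  let copy (j : ℕ) : ℕ := ∑ t ∈ Ico i j, nonAscent (key ∘ s) t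
  have hsorted : ((List.Ico i k).map fun j => (copy j, s j)).Pairwise
      fun x y => toLex (x.1, key x.2) < toLex (y.1, key y.2) :=
    List.pairwise_map.mpr <| (List.Ico.pairwise_lt i k).imp_of_mem fun hj _ hlt =>
      toLex_sum_nonAscent_lt (key ∘ s) (List.Ico.mem.mp hj).1 hlt
  have hsubset : ((List.Ico i k).map fun j => (copy j, s j)) ⊆ List.range m ×ˢ w := by
    refine List.forall_mem_map.mpr fun j hj => List.pair_mem_product.mpr ⟨?_, hs j⟩
    exact List.mem_range.mpr (hm j (mem_Ico.mpr (List.Ico.mem.mp hj)))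
  have hsublist := sublist_of_subset_of_pairwise_lt hsorted
    (pairwise_toLex_lt_product List.pairwise_lt_range hw) hsubset
  simpa [← map_snd_range_product, Function.comp_def] using hsublist.map Prod.snd

theorem sum_Ico_add_sum_Ico_add_left {f g e : ℕ → ℕ}
    (hfg : ∀ t, f t + g t + e t = 1 + e (t + 1)) {i k : ℕ} (hik : i ≤ k) :
    ∑ t ∈ Ico i k, f t + ∑ t ∈ Ico i k, g t + e i = (k - i) + e k := by
  induction k, hik using Nat.le_induction with
  | base => simp
  | succ k hik ih =>
    have := hfg k
    simp only [sum_Ico_succ_top hik]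
    omega

theorem mul_le_of_add_eq_add_three_mul {a b x y : ℕ} (hab : a ≤ b) (hba : b ≤ a + 1)
    (hxy : x + y = a + 3 * b) : x * y ≤ 2 * (a + b) * b := by
  obtain ⟨c, rfl⟩ := Nat.exists_eq_add_of_le hab
  have hsq : c ^ 2 ≤ 1 := pow_le_one₀ c.zero_le (by omega)
  have hsum : x + y = 4 * a + 3 * c := by omega
  have hamgm : 4 * (x * y) ≤ 4 * (2 * (a + (a + c)) * (a + c)) + c ^ 2 := calc
    4 * (x * y) = 4 * x * y := by ring
    _ ≤ (x + y) ^ 2 := four_mul_le_sq_add x y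
    _ = 4 * (2 * (a + (a + c)) * (a + c)) + c ^ 2 := by rw [hsum]; ring
  omega

/-- For windows of length `L = ∑ g + (b - a)` the two bounds are equivalent. Summed over all windows
of a period, the first one reads `L * ∑ f < n * b + ∑ e`, which AM-GM supplies. -/
theorem exists_balanced_cut {a b n : ℕ} (hab : a ≤ b) (hba : b ≤ a + 1) (hn : n = 2 * (a + b))
    {f g e : ℕ → ℕ} (hf : Function.Periodic f n) (hg : Function.Periodic g n)
    (he : Function.Periodic e n) (hef : ∀ t, e (t + 1) ≤ f t)
    (hfg : ∀ t, f t + g t + e t = 1 + e (t + 1)) (hpos : ∃ t ∈ range n, 0 < e t) :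
    ∃ i k, i ≤ k ∧ k ≤ i + n ∧
      ∑ t ∈ Ico i k, f t < b + e k ∧ ∑ t ∈ Ico k (i + n), g t < a + e i := by
  have he_pos (i : ℕ) : 0 < ∑ t ∈ range n, e (t + i) := by
    obtain ⟨t, ht, het⟩ := hpos
    rw [sum_range_add_of_periodic he]
    exact sum_pos' (fun _ _ => Nat.zero_le _) ⟨t, ht, het⟩
  have hf_pos : 0 < ∑ t ∈ range n, f t := (he_pos 1).trans_le (sum_le_sum fun t _ => hef t)
  have hfg_sum : ∑ t ∈ range n, f t + ∑ t ∈ range n, g t = n := by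
    have := sum_Ico_add_sum_Ico_add_left hfg n.zero_le
    simp only [Nat.Ico_zero_eq_range, he.eq] at this
    omega
  set L := ∑ t ∈ range n, g t + (b - a)
  obtain ⟨i, -, hi⟩ : ∃ i ∈ range n, ∑ t ∈ Ico i (i + L), f t < b + e (i + L) := by
    refine exists_lt_of_sum_lt ?_
    calc ∑ i ∈ range n, ∑ t ∈ Ico i (i + L), f t
      _ = L * ∑ t ∈ range n, f t := sum_sum_Ico_add_of_periodic hf L
      _ ≤ 2 * (a + b) * b := mul_le_of_add_eq_add_three_mul hab hba (by omega)
      _ = n * b := by rw [hn]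
      _ < n * b + ∑ i ∈ range n, e (i + L) := Nat.lt_add_of_pos_right (he_pos L)
      _ = ∑ i ∈ range n, (b + e (i + L)) := by simp [sum_add_distrib]
  refine ⟨i, i + L, by omega, by omega, hi, ?_⟩
  have hwindow := sum_Ico_add_sum_Ico_add_left hfg (Nat.le_add_right i L)
  have hsplit := sum_Ico_consecutive g (Nat.le_add_right i L) (show i + L ≤ i + n by omega)
  rw [sum_Ico_add_period hg] at hsplit
  omega

/-- The word `1, n, n - 1, …, 2`. -/
def oneThenDescending (n : ℕ) : List ℕ :=
  1 :: (List.range' 2 (n - 1)).reverse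

/-- A key on `{1, …, n}` that increases along `oneThenDescending n`. -/
def oneThenDescendingKey (n x : ℕ) : ℕ :=
  if x = 1 then 0 else n + 1 - x

/-- The candidate rosary: `b` copies of `1, n, …, 2` followed by `a` copies of `1, 2, …, n`. -/
def zigzag (n a b : ℕ) : List ℕ :=
  (List.replicate b (oneThenDescending n)).flatten ++ (List.replicate a (List.range' 1 n)).flatten

theorem mem_oneThenDescending {n x : ℕ} (hn : 0 < n) :
    x ∈ oneThenDescending n ↔ 1 ≤ x ∧ x ≤ n := by
  simp only [oneThenDescending, List.mem_cons, List.mem_reverse, List.mem_range'_1]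
  omega

theorem pairwise_oneThenDescendingKey_lt (n : ℕ) :
    (oneThenDescending n).Pairwise (oneThenDescendingKey n · < oneThenDescendingKey n ·) := by
  simp only [oneThenDescending, List.pairwise_cons, List.pairwise_reverse, List.mem_reverse,
    oneThenDescendingKey]
  constructor
  · intro x hx
    rw [List.mem_range'_1] at hx
    split_ifs <;> omega
  · refine List.Pairwise.imp_of_mem (fun {x y} hx hy hxy => ?_) List.pairwise_lt_range'
    rw [List.mem_range'_1] at hx hy
    split_ifs <;> omega

theorem length_zigzag {n : ℕ} (hn : 0 < n) (a b : ℕ) : (zigzag n a b).length = (a + b) * n := by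
  have hlen : (oneThenDescending n).length = n := by
    simp [oneThenDescending, Nat.sub_add_cancel hn]
  simp [zigzag, hlen, Nat.add_mul, Nat.add_comm]

theorem bounds_of_mem_zigzag {n a b x : ℕ} (hn : 0 < n) (hx : x ∈ zigzag n a b) :
    1 ≤ x ∧ x ≤ n := by
  simp only [zigzag, List.mem_append, List.mem_flatten, List.mem_replicate] at hx
  obtain ⟨_, ⟨-, rfl⟩, hx⟩ | ⟨_, ⟨-, rfl⟩, hx⟩ := hx
  · exact (mem_oneThenDescending hn).mp hx
  · rw [List.mem_range'_1] at hx
    omega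

/-- The indicator of the times at which `s` takes the value `1`, the common first letter of
the two words that make up `zigzag`. -/
def visitsOne (s : ℕ → ℕ) (t : ℕ) : ℕ :=
  if s t = 1 then 1 else 0

section Sequence

variable {n : ℕ} {s : ℕ → ℕ}

theorem visitsOne_periodic (hs : Function.Periodic s n) : Function.Periodic (visitsOne s) n :=
  fun t => by simp only [visitsOne, hs t]

theorem visitsOne_succ_le_nonAscent (hs : ∀ t, 1 ≤ s t) (t : ℕ) :
    visitsOne s (t + 1) ≤ nonAscent s t := by
  have := hs t
  simp only [visitsOne, nonAscent]
  split_ifs <;> omega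

theorem visitsOne_succ_le_nonAscent_key (t : ℕ) :
    visitsOne s (t + 1) ≤ nonAscent (oneThenDescendingKey n ∘ s) t := by
  simp only [visitsOne, nonAscent, Function.comp_apply, oneThenDescendingKey]
  split_ifs <;> omega

/-- A step avoiding `1` ascends in exactly one of the two orders; a step into `1` ascends in neither
and a step out of `1` in both. -/
theorem nonAscent_key_add_nonAscent_add_visitsOne (hs : ∀ t, 1 ≤ s t ∧ s t ≤ n) {t : ℕ}
    (hne : s t ≠ s (t + 1)) :
    nonAscent (oneThenDescendingKey n ∘ s) t + nonAscent s t + visitsOne s t =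
      1 + visitsOne s (t + 1) := by
  have := hs t
  have := hs (t + 1)
  simp only [visitsOne, nonAscent, Function.comp_apply, oneThenDescendingKey]
  split_ifs <;> omega

theorem exists_map_Ico_sublist_zigzag {a b : ℕ} (hab : a ≤ b) (hba : b ≤ a + 1)
    (hn : n = 2 * (a + b)) (hper : Function.Periodic s n) (hs : ∀ t, 1 ≤ s t ∧ s t ≤ n)
    (hne : ∀ t, s t ≠ s (t + 1)) (hone : ∃ t ∈ range n, s t = 1) :
    ∃ i, (List.Ico i (i + n)).map s <+ zigzag n a b := by
  have hn_pos : 0 < n := (hs 0).1.trans (hs 0).2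
  have hmem_desc (t : ℕ) : s t ∈ oneThenDescending n := (mem_oneThenDescending hn_pos).mpr (hs t)
  have hmem_asc (t : ℕ) : s t ∈ List.range' 1 n := by
    have := hs t
    rw [List.mem_range'_1]
    omega
  obtain ⟨i, k, hik, hki, hdesc, hasc⟩ := exists_balanced_cut hab hba hn
    (nonAscent_periodic (hper.comp (oneThenDescendingKey n))) (nonAscent_periodic hper)
    (visitsOne_periodic hper) visitsOne_succ_le_nonAscent_key
    (fun t => nonAscent_key_add_nonAscent_add_visitsOne hs (hne t))
    (hone.imp fun t ht => ⟨ht.1, by simp [visitsOne, ht.2]⟩)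
  refine ⟨i, ?_⟩
  rw [← List.Ico.append_consecutive hik hki, List.map_append]
  refine List.Sublist.append
    (map_Ico_sublist_flatten_replicate (pairwise_oneThenDescendingKey_lt n) hmem_desc
      fun j hj => ?_)
    (map_Ico_sublist_flatten_replicate (key := id) List.pairwise_lt_range' hmem_asc
      fun j hj => ?_)
  · have := sum_Ico_add_le_of_mem (visitsOne_succ_le_nonAscent_key (n := n) (s := s)) hj
    omega
  · have := sum_Ico_add_le_of_mem (visitsOne_succ_le_nonAscent fun t => (hs t).1) hj
    rw [visitsOne_periodic hper i] at this
    rw [Function.id_comp]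
    omega

end Sequence

theorem isRosary_zigzag {a b n : ℕ} (hab : a ≤ b) (hba : b ≤ a + 1) (hn : n = 2 * (a + b))
    (hpos : 0 < n) : IsRosary n (zigzag n a b) := by
  refine ⟨fun x hx => bounds_of_mem_zigzag hpos hx, fun p hp => ?_⟩
  have hlen : p.length = n := by simpa using hp.length_eq
  have hmem {x : ℕ} : x ∈ p ↔ 1 ≤ x ∧ x ≤ n := by
    rw [hp.mem_iff, List.mem_range'_1]
    omega
  obtain ⟨s, hper, hrot⟩ := exists_periodic_map_Ico_eq_rotate (List.length_pos_iff.mp (hlen ▸ hpos))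
  rw [hlen] at hper hrot
  have hbounds (t : ℕ) : 1 ≤ s t ∧ s t ≤ n := by
    rw [← hmem, ← List.mem_rotate (n := t), ← hrot t]
    exact List.mem_map_of_mem (List.Ico.mem.mpr (by omega))
  have hne (t : ℕ) : s t ≠ s (t + 1) := by
    have hnodup : ((List.Ico t (t + n)).map s).Nodup := by
      rw [hrot t, List.nodup_rotate, hp.nodup_iff]
      exact List.nodup_range'
    intro heq
    have := List.inj_on_of_nodup_map hnodup (List.Ico.mem.mpr (by omega))
      (List.Ico.mem.mpr (by omega)) heq
    omega
  have hone : ∃ t ∈ range n, s t = 1 := by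
    have : 1 ∈ (List.Ico 0 (0 + n)).map s := by
      rw [hrot 0, List.mem_rotate, hmem]
      omega
    simpa using this
  obtain ⟨i, hi⟩ := exists_map_Ico_sublist_zigzag hab hba hn hper hbounds hne hone
  rw [hrot i] at hi
  exact exists_sublist_rotate_of_isRotated ⟨i, rfl⟩ hi

theorem gupta_even (n : ℕ) (hn : 1 < n) (he : Even n) : rosaryNumber n ≤ n ^ 2 / 2 := by
  obtain ⟨k, hk⟩ := he
  have hsplit : n = 2 * (k / 2 + (k + 1) / 2) := by omega
  have hrosary : IsRosary n (zigzag n (k / 2) ((k + 1) / 2)) :=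
    isRosary_zigzag (by omega) (by omega) hsplit (by omega)
  have hlength : (zigzag n (k / 2) ((k + 1) / 2)).length = n ^ 2 / 2 := by
    rw [length_zigzag (by omega), eq_comm]
    refine Nat.div_eq_of_eq_mul_right two_pos ?_
    rw [← mul_assoc, ← hsplit, sq]
  exact Nat.sInf_le ⟨_, hlength, hrosary⟩
end

section
/- The cyclic sequence 1,2,3,4,5,6,1,2,1,5,6,4,3,1,2,6,5 of length 17 is a rosary of degree 6. -/
/-!
Up to rotation the cycle is `3 4 Z 4 3 Y` with `Z = 5 6 1 2 1 5 6` and `Y = 1 2 6 5 1 2`.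
Containment in a cycle is invariant under rotating the permutation, so the permutation may be
assumed to start with `3`. Starting the cycle at either of its two `3`s, it remains to place the
other entries `a 4 b` in `4 Z 4 Y` or in `Y 4 Z 4`, where `a b` is an arrangement of `1, 2, 5, 6`.
If `a` is empty, `b` is contained in `Z Y`; if `b` is empty, `a` is contained in `Y Z`; otherwise
one of `a`, `b` is contained in `Z` and the other in `Y`.
-/

open List

section Cyclic

variable {α : Type*} {a b c c' l p q Y Z : List α} {x y : α}

/-- `p` is a cyclic subsequence of the cycle represented by `c`, i.e. a subsequence of some
rotation of `c`. The body is the condition that `IsRosary` imposes on each permutation. -/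
def IsCyclicSublist (p c : List α) : Prop :=
  ∃ j, p <+ c.rotate j

theorem isCyclicSublist_iff_exists_isRotated : IsCyclicSublist p c ↔ ∃ d, c ~r d ∧ p <+ d :=
  ⟨fun ⟨j, hj⟩ => ⟨_, ⟨j, rfl⟩, hj⟩, fun ⟨_, ⟨j, hj⟩, hp⟩ => ⟨j, hj ▸ hp⟩⟩

theorem IsCyclicSublist.of_isRotated (hc : c ~r c') (hp : IsCyclicSublist p c') :
    IsCyclicSublist p c := by
  rw [isCyclicSublist_iff_exists_isRotated] at hp ⊢
  obtain ⟨d, hd, hpd⟩ := hp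
  exact ⟨d, hc.trans hd, hpd⟩

theorem IsCyclicSublist.append_comm (h : IsCyclicSublist (p ++ q) c) :
    IsCyclicSublist (q ++ p) c := by
  rw [isCyclicSublist_iff_exists_isRotated] at h ⊢
  obtain ⟨d, hd, hpq⟩ := h
  obtain ⟨d₁, d₂, rfl, hp, hq⟩ := append_sublist_iff.1 hpq
  exact ⟨d₂ ++ d₁, hd.trans isRotated_append, hq.append hp⟩

theorem isCyclicSublist_of_perm_cons (h : ∀ q, q ~ l → IsCyclicSublist (x :: q) c)
    (hp : p ~ x :: l) : IsCyclicSublist p c := by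
  obtain ⟨s, t, rfl⟩ := append_of_mem (hp.mem_iff.2 mem_cons_self)
  have hts : t ++ s ~ l := perm_append_comm.trans (perm_middle.symm.trans hp).cons_inv
  exact (h _ hts).append_comm (p := x :: t)

theorem isCyclicSublist_cons_of_sublist_arcs (h : q <+ Z ++ Y ∨ q <+ Y ++ Z) :
    IsCyclicSublist (x :: q) (x :: Z ++ x :: Y) := by
  rw [isCyclicSublist_iff_exists_isRotated]
  rcases h with h | h
  · exact ⟨_, .refl _, (h.trans ((sublist_cons_self x Y).append_left Z)).cons_cons x⟩
  · exact ⟨_, isRotated_append, (h.trans ((sublist_cons_self x Z).append_left Y)).cons_cons x⟩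

theorem append_cons_sublist_arcs (hZY : a ++ b <+ Z ++ Y) (hYZ : a ++ b <+ Y ++ Z)
    (hsplit : a ≠ [] → b ≠ [] → a <+ Z ∧ b <+ Y ∨ a <+ Y ∧ b <+ Z) :
    a ++ y :: b <+ (y :: Z ++ [y]) ++ Y ∨ a ++ y :: b <+ Y ++ (y :: Z ++ [y]) := by
  rcases eq_or_ne a [] with rfl | ha
  · left
    have hb : b <+ Z ++ [y] ++ Y := hZY.trans ((sublist_append_left Z [y]).append_right Y)
    exact hb.cons_cons y
  rcases eq_or_ne b [] with rfl | hb
  · right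
    rw [append_nil] at hYZ
    have ha : a <+ Y ++ y :: Z := hYZ.trans ((sublist_cons_self y Z).append_left Y)
    simpa only [append_assoc] using ha.append_right [y]
  rcases hsplit ha hb with ⟨haZ, hbY⟩ | ⟨haY, hbZ⟩
  · left
    simpa only [append_assoc, singleton_append] using
      (haZ.trans (sublist_cons_self y Z)).append (hbY.cons_cons y)
  · right
    exact haY.append ((hbZ.trans (sublist_append_left Z [y])).cons_cons y)

theorem isCyclicSublist_of_perm_cons_cons
    (hwhole : ∀ w, w ~ l → w <+ Z ++ Y ∧ w <+ Y ++ Z)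
    (hsplit : ∀ a b, a ++ b ~ l → a ≠ [] → b ≠ [] → a <+ Z ∧ b <+ Y ∨ a <+ Y ∧ b <+ Z)
    (hp : p ~ x :: y :: l) :
    IsCyclicSublist p (x :: (y :: Z ++ [y]) ++ x :: Y) := by
  refine isCyclicSublist_of_perm_cons (fun q hq => isCyclicSublist_cons_of_sublist_arcs ?_) hp
  obtain ⟨a, b, rfl⟩ := append_of_mem (hq.mem_iff.2 mem_cons_self)
  have hab : a ++ b ~ l := (perm_middle.symm.trans hq).cons_inv
  exact append_cons_sublist_arcs (hwhole _ hab).1 (hwhole _ hab).2 (hsplit a b hab)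

end Cyclic

/-- The arc of the cycle strictly between its two `4`s that avoids `3`. -/
abbrev arcBetweenFours : List ℕ := [5, 6, 1, 2, 1, 5, 6]

/-- The arc of the cycle strictly between its two `3`s that avoids `4`. -/
abbrev arcBetweenThrees : List ℕ := [1, 2, 6, 5, 1, 2]

theorem sublist_append_arcs_of_perm (w : List ℕ) (hw : w ~ [1, 2, 5, 6]) :
    w <+ arcBetweenFours ++ arcBetweenThrees ∧ w <+ arcBetweenThrees ++ arcBetweenFours := by
  have check : ∀ w ∈ permutations' [1, 2, 5, 6],
      w <+ arcBetweenFours ++ arcBetweenThrees ∧ w <+ arcBetweenThrees ++ arcBetweenFours := by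
    decide
  exact check w (mem_permutations'.2 hw)

theorem sublist_arcs_of_append_perm (a b : List ℕ) (hab : a ++ b ~ [1, 2, 5, 6])
    (ha : a ≠ []) (hb : b ≠ []) :
    a <+ arcBetweenFours ∧ b <+ arcBetweenThrees ∨
      a <+ arcBetweenThrees ∧ b <+ arcBetweenFours := by
  have check : ∀ w ∈ permutations' [1, 2, 5, 6], ∀ i ∈ Finset.Ioo 0 4,
      w.take i <+ arcBetweenFours ∧ w.drop i <+ arcBetweenThrees ∨
        w.take i <+ arcBetweenThrees ∧ w.drop i <+ arcBetweenFours := by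
    decide
  have hlength : a.length + b.length = 4 := by simpa using hab.length_eq
  have hi : a.length ∈ Finset.Ioo 0 4 := by
    have := length_pos_iff.2 ha
    have := length_pos_iff.2 hb
    exact Finset.mem_Ioo.2 (by omega)
  simpa only [take_left, drop_left] using check _ (mem_permutations'.2 hab) _ hi

theorem rosary_six_17' :
    IsRosary 6 [1, 2, 3, 4, 5, 6, 1, 2, 1, 5, 6, 4, 3, 1, 2, 6, 5] := by
  refine ⟨by decide, fun p hp => ?_⟩
  have hrot : [1, 2, 3, 4, 5, 6, 1, 2, 1, 5, 6, 4, 3, 1, 2, 6, 5] ~r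
      3 :: (4 :: arcBetweenFours ++ [4]) ++ 3 :: arcBetweenThrees := ⟨2, rfl⟩
  have hperm : p ~ [3, 4, 1, 2, 5, 6] := hp.trans (by decide)
  exact IsCyclicSublist.of_isRotated hrot (isCyclicSublist_of_perm_cons_cons
    sublist_append_arcs_of_perm sublist_arcs_of_append_perm hperm)
end

section
/- The cyclic sequence 1,2,3,4,5,6,7,8,1,2,3,4,5,6,7,8,6,5,4,3,2,1,7,6,5,4,3,2,1,8,7 of length 31 is a rosary of degree 8; hence r(8) ≤ 31 < 8²/2 = 32. -/
/-!
Whether a word occurs as a subsequence of some rotation of a cycle depends on the word only up to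
rotation. Hence it is enough to treat permutations that begin with one chosen letter, say `8`, and
to read the cycle once round from each of the three occurrences of `8`. The remaining `7!`
arrangements of `1, ..., 7` are searched letter by letter, matching each letter greedily: a word
`x :: q` is a subsequence of `s` exactly when `q` is a subsequence of what follows the first `x`
in `s`.
-/

open List

section CyclicOccurrence

variable {α : Type*} {p q c : List α} {x : α}

/-- The word `p` is a subsequence of the cycle `c`, read once round from a suitable place. -/
def OccursCyclically (p c : List α) : Prop :=
  ∃ j, p <+ c.rotate j

theorem occursCyclically_iff_exists_isRotated :
    OccursCyclically p c ↔ ∃ d, c ~r d ∧ p <+ d :=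
  ⟨fun ⟨j, hj⟩ => ⟨_, ⟨j, rfl⟩, hj⟩, fun ⟨_, ⟨j, hj⟩, hp⟩ => ⟨j, hj ▸ hp⟩⟩

theorem OccursCyclically.of_isRotated (hp : OccursCyclically p c) (hpq : p ~r q) :
    OccursCyclically q c := by
  obtain ⟨d, hcd, hpd⟩ := occursCyclically_iff_exists_isRotated.1 hp
  obtain ⟨k, hk, rfl⟩ := isRotated_iff_mod.1 hpq
  rw [← take_append_drop k p, append_sublist_iff] at hpd
  obtain ⟨d₁, d₂, rfl, htake, hdrop⟩ := hpd
  rw [rotate_eq_drop_append_take hk]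
  exact occursCyclically_iff_exists_isRotated.2
    ⟨d₂ ++ d₁, hcd.trans isRotated_append, hdrop.append htake⟩

theorem exists_isRotated_cons_of_mem (hx : x ∈ p) : ∃ q, p ~r x :: q := by
  obtain ⟨u, v, rfl⟩ := append_of_mem hx
  exact ⟨v ++ u, isRotated_append⟩

theorem forall_perm_cons_occursCyclically_iff {l : List α} :
    (∀ p, p ~ x :: l → OccursCyclically p c) ↔ ∀ q, q ~ l → OccursCyclically (x :: q) c := by
  refine ⟨fun h q hq => h _ (hq.cons x), fun h p hp => ?_⟩
  obtain ⟨q, hpq⟩ := exists_isRotated_cons_of_mem (hp.mem_iff.2 mem_cons_self)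
  exact (h q (hpq.perm.symm.trans hp).cons_inv).of_isRotated hpq.symm

variable [DecidableEq α]

/-- The words read once round the cycle `c`, starting right behind each occurrence of `x` and
ending right before that same occurrence. -/
def cyclicWordsAfter (x : α) (c : List α) : List (List α) :=
  (c.cyclicPermutations.filter (·.head? = some x)).map tail

theorem mem_cyclicWordsAfter_iff {t : List α} : t ∈ cyclicWordsAfter x c ↔ x :: t ~r c := by
  simp only [cyclicWordsAfter, mem_map, mem_filter, mem_cyclicPermutations_iff, decide_eq_true_eq]
  constructor
  · rintro ⟨d, ⟨hdc, hhead⟩, rfl⟩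
    rwa [cons_head?_tail hhead]
  · exact fun h => ⟨x :: t, ⟨h, rfl⟩, rfl⟩

theorem occursCyclically_cons_iff :
    OccursCyclically (x :: q) c ↔ ∃ t ∈ cyclicWordsAfter x c, q <+ t := by
  simp only [occursCyclically_iff_exists_isRotated, mem_cyclicWordsAfter_iff]
  constructor
  · rintro ⟨d, hcd, hqd⟩
    obtain ⟨d₁, d₂, rfl, hx, hq⟩ := cons_sublist_iff.1 hqd
    obtain ⟨u, v, rfl⟩ := append_of_mem hx
    refine ⟨v ++ d₂ ++ u, IsRotated.symm (hcd.trans ?_), ?_⟩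
    · simpa only [append_assoc, cons_append] using isRotated_append (l := u) (l' := x :: (v ++ d₂))
    · exact hq.trans ((sublist_append_right v d₂).trans (sublist_append_left _ u))
  · exact fun ⟨t, ht, hqt⟩ => ⟨x :: t, ht.symm, hqt.cons_cons x⟩

end CyclicOccurrence

section Arrangements

variable {α : Type*} {x : α} {k : ℕ} {q l s : List α} {S : List (List α)}

/-- Every arrangement of `k` letters of the multiset `l` is a subsequence of a word in `S`. -/
def ContainsArrangements (k : ℕ) (l : List α) (S : List (List α)) : Prop :=
  ∀ p, p <+~ l → p.length = k → ∃ s ∈ S, p <+ s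

theorem containsArrangements_zero_iff : ContainsArrangements 0 l S ↔ S ≠ [] := by
  constructor
  · intro h
    obtain ⟨s, hs, -⟩ := h [] nil_subperm rfl
    exact ne_nil_of_mem hs
  · intro hS p _ hp
    obtain ⟨s, hs⟩ := exists_mem_of_ne_nil S hS
    exact ⟨s, hs, length_eq_zero_iff.1 hp ▸ nil_sublist s⟩

theorem containsArrangements_length_iff :
    ContainsArrangements l.length l S ↔ ∀ p, p ~ l → ∃ s ∈ S, p <+ s :=
  ⟨fun h p hp => h p hp.subperm hp.length_eq,
    fun h p hp hlen => h p (hp.perm_of_length_le hlen.ge)⟩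

variable [DecidableEq α]

/-- The part of `s` behind the first occurrence of `x`, or `none` if `x` does not occur in `s`. -/
def suffixAfter (x : α) (s : List α) : Option (List α) :=
  (s.dropWhile (· != x)).tail?

theorem cons_sublist_iff_exists_suffixAfter :
    x :: q <+ s ↔ ∃ t, suffixAfter x s = some t ∧ q <+ t := by
  induction s with
  | nil => simp [suffixAfter]
  | cons a s ih =>
    obtain rfl | hax := eq_or_ne a x
    · simp [suffixAfter]
    · simpa [suffixAfter, hax, sublist_cons_iff, hax.symm] using ih

theorem exists_mem_cons_sublist_iff :
    (∃ s ∈ S, x :: q <+ s) ↔ ∃ t ∈ S.filterMap (suffixAfter x), q <+ t := by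
  simp only [cons_sublist_iff_exists_suffixAfter, mem_filterMap]
  grind

theorem cons_subperm_iff_subperm_erase : x :: q <+~ l ↔ x ∈ l ∧ q <+~ l.erase x := by
  constructor
  · exact fun h => ⟨h.subset mem_cons_self, by simpa only [erase_cons_head] using h.erase x⟩
  · exact fun ⟨hx, hq⟩ => ((subperm_cons x).2 hq).trans (perm_cons_erase hx).symm.subperm

theorem containsArrangements_succ_iff :
    ContainsArrangements (k + 1) l S ↔
      ∀ x ∈ l, ContainsArrangements k (l.erase x) (S.filterMap (suffixAfter x)) := by
  constructor
  · intro h x hx q hq hk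
    exact exists_mem_cons_sublist_iff.1
      (h (x :: q) (cons_subperm_iff_subperm_erase.2 ⟨hx, hq⟩) (by rw [length_cons, hk]))
  · rintro h (_ | ⟨x, q⟩) hp hk
    · simp at hk
    · obtain ⟨hx, hq⟩ := cons_subperm_iff_subperm_erase.1 hp
      exact exists_mem_cons_sublist_iff.2 (h x hx q hq (Nat.succ.inj hk))

instance ContainsArrangements.decidable :
    ∀ (k : ℕ) (l : List α) (S : List (List α)), Decidable (ContainsArrangements k l S)
  | 0, _, _ => decidable_of_iff' _ containsArrangements_zero_iff
  | k + 1, l, S =>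
    have (x : α) : Decidable (ContainsArrangements k (l.erase x) (S.filterMap (suffixAfter x))) :=
      ContainsArrangements.decidable k _ _
    decidable_of_iff' _ containsArrangements_succ_iff

end Arrangements

section Rosary

variable {n : ℕ} {c : List ℕ}

theorem isRosary_succ_iff :
    IsRosary (n + 1) c ↔ (∀ x ∈ c, 1 ≤ x ∧ x ≤ n + 1) ∧
      ContainsArrangements n (range' 1 n) (cyclicWordsAfter (n + 1) c) := by
  have range'_perm : range' 1 (n + 1) ~ (n + 1) :: range' 1 n := by
    rw [range'_concat, one_mul, add_comm 1 n]
    exact perm_append_singleton _ _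
  have perms_iff := calc
    (∀ p, p ~ range' 1 (n + 1) → OccursCyclically p c)
      ↔ ∀ p, p ~ (n + 1) :: range' 1 n → OccursCyclically p c := by
        simp only [range'_perm.congr_right]
    _ ↔ ∀ q, q ~ range' 1 n → OccursCyclically ((n + 1) :: q) c :=
        forall_perm_cons_occursCyclically_iff
    _ ↔ ContainsArrangements n (range' 1 n) (cyclicWordsAfter (n + 1) c) := by
        simpa only [occursCyclically_cons_iff, length_range'] using
          (containsArrangements_length_iff (l := range' 1 n)).symm
  exact and_congr_right fun _ => perms_iff

theorem IsRosary.rosaryNumber_le_length (h : IsRosary n c) : rosaryNumber n ≤ c.length :=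
  Nat.sInf_le ⟨c, rfl, h⟩

end Rosary

theorem rosary_eight_31 :
    IsRosary 8 [1, 2, 3, 4, 5, 6, 7, 8, 1, 2, 3, 4, 5, 6, 7, 8, 6, 5, 4, 3, 2, 1,
      7, 6, 5, 4, 3, 2, 1, 8, 7] ∧
    rosaryNumber 8 ≤ 31 ∧ 31 < 8 ^ 2 / 2 := by
  suffices h : IsRosary 8 _ from ⟨h, h.rosaryNumber_le_length, by norm_num⟩
  exact isRosary_succ_iff.2 ⟨by decide, by decide +kernel⟩
end
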